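/- arXiv:2207.04610 — 2 statements merged into one kernel-verified Lean document; each statement's English description precedes it below -/
import Mathlib

section
/- Let r be a positive integer and a₁, a₂, a₃, a₄, e integers with gcd(a₄,e·mod structure) = gcd(e,r), gcd(a_i, r) = 1 for i = 1,2,3, gcd(e,r) > 1, and suppose that for every integer j with 1 ≤ j ≤ r-1 one has {j a₁/r} + {j a₂/r} + {j a₃/r} + {j a₄/r} = {j e/r} + j/r + 1. Then a₄ ≡ e (mod r), and there exist indices i, j, k with {i,j,k} = {1,2,3} such that a_i ≡ 1 (mod r) and a_j + a_k ≡ 0 (mod r). -/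
/-!
Subtracting the relations for `j` and `-j` turns the hypothesis into an additive relation
`∑ i, ((j xᵢ / r)) = 0` between values of the sawtooth function at the multiples of
`x = (a₁, a₂, a₃, a₄, -e, -1)`. The only relations of this kind are the trivial ones: the multiset
of the `xᵢ` modulo `r` is closed under negation. Indeed the value at `1` of the `L`-function
attached to `k ↦ sin (2πxk / r)` is `-π ((x / r))`, so twisting by Dirichlet characters and using
`L(1, χ) ≠ 0` shows that `∑ i, sin (2πxᵢk / r)` vanishes at all units `k`; at the remaining `k` it
vanishes by induction on `r`, and Fourier inversion recovers the `xᵢ`.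

Now negation pairs off the units among the `xᵢ`, without fixed points when `r > 2`. Since `e` is
not a unit, parity forces the units to be exactly `a₁, a₂, a₃, -1`: one of the first three is `1`
and the other two cancel. Then `a₄ ≡ e` is read off from the original relation at `j = 1`.
-/

section SinZeta

open Complex Set HurwitzZeta

/-- The function `(1 - z) Li_s(z)`, where `Li_s(z) = ∑ zⁿ / nˢ` is the polylogarithm, as a power
series in `z`. Its coefficients are `O(n⁻²)` uniformly in `1 ≤ s ≤ 2`, so that, unlike the
polylogarithm series, it converges absolutely on the closed unit disc down to `s = 1`. The term
`n = 0` relies on the convention `0 ^ (-s) = 0` for `s ≠ 0`. -/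
noncomputable def oneSubMulPolylog (s : ℝ) (z : ℂ) : ℂ :=
  ∑' n : ℕ, (((n + 1 : ℝ) ^ (-s) - (n : ℝ) ^ (-s) : ℝ) : ℂ) * z ^ (n + 1)

lemma abs_rpow_neg_succ_sub_le {s : ℝ} (hs : s ∈ Icc 1 2) (n : ℕ) :
    |(n + 1 : ℝ) ^ (-s) - (n : ℝ) ^ (-s)| ≤ 4 / ((n : ℝ) + 1) ^ 2 := by
  obtain ⟨hs₁, hs₂⟩ := hs
  rcases n.eq_zero_or_pos with rfl | hn
  · norm_num [Real.zero_rpow (show -s ≠ 0 by linarith)]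
  have hn₁ : (1 : ℝ) ≤ n := by exact_mod_cast hn
  have hbernoulli : 1 - s / (n + 1) ≤ (n / (n + 1) : ℝ) ^ s := by
    have := one_add_mul_self_le_rpow_one_add (s := -(1 / (n + 1 : ℝ)))
      (by rw [neg_le_neg_iff, div_le_one (by positivity)]; linarith) hs₁
    convert this using 2 <;> field
  have hfactor : (n : ℝ) ^ (-s) - (n + 1 : ℝ) ^ (-s) =
      (n : ℝ) ^ (-s) * (1 - (n / (n + 1) : ℝ) ^ s) := by
    rw [Real.div_rpow (by positivity) (by positivity), Real.rpow_neg (by positivity),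
      Real.rpow_neg (by positivity)]
    field_simp
  have hquot : (n / (n + 1) : ℝ) ^ s ≤ 1 :=
    Real.rpow_le_one (by positivity) (div_le_one_of_le₀ (by linarith) (by positivity))
      (by linarith)
  have hpow : (n : ℝ) ^ (-s) ≤ 1 / n := by
    simpa [Real.rpow_neg_one] using
      Real.rpow_le_rpow_of_exponent_le hn₁ (show -s ≤ -1 by linarith)
  rw [abs_sub_comm, hfactor, abs_of_nonneg (mul_nonneg (by positivity) (by linarith))]
  calc (n : ℝ) ^ (-s) * (1 - (n / (n + 1) : ℝ) ^ s)
      ≤ 1 / n * (2 / (n + 1)) := by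
        have : s / (n + 1) ≤ 2 / ((n : ℝ) + 1) := by gcongr
        gcongr
        linarith
    _ ≤ 4 / ((n : ℝ) + 1) ^ 2 := by
        rw [div_mul_div_comm, div_le_div_iff₀ (by positivity) (by positivity)]
        nlinarith

lemma continuousOn_oneSubMulPolylog :
    ContinuousOn (fun p : ℝ × ℂ ↦ oneSubMulPolylog p.1 p.2)
      (Icc 1 2 ×ˢ Metric.closedBall 0 1) := by
  have hsummable : Summable fun n : ℕ ↦ 4 / ((n : ℝ) + 1) ^ 2 := by
    have := (summable_nat_add_iff 1).2 (Real.summable_nat_pow_inv.2 one_lt_two)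
    simpa [div_eq_mul_inv] using this.mul_left 4
  refine continuousOn_tsum (fun n ↦ ?_) hsummable fun n p hp ↦ ?_
  · intro p hp
    have hp₁ : -p.1 ≠ 0 := by linarith [hp.1.1]
    have hrpow (x : ℝ) : ContinuousAt (fun p : ℝ × ℂ ↦ x ^ (-p.1)) p :=
      (Real.continuousAt_const_rpow' hp₁).comp (f := fun p : ℝ × ℂ ↦ -p.1) (by fun_prop)
    refine ContinuousAt.continuousWithinAt (.mul ?_ (by fun_prop))
    exact continuous_ofReal.continuousAt.comp ((hrpow _).sub (hrpow _))
  · have hz : ‖p.2‖ ≤ 1 := by simpa using hp.2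
    rw [norm_mul, norm_pow, norm_real, Real.norm_eq_abs]
    exact (mul_le_of_le_one_right (abs_nonneg _) (pow_le_one₀ (norm_nonneg _) hz)).trans
      (abs_rpow_neg_succ_sub_le hp.1 n)

lemma oneSubMulPolylog_eq_of_hasSum {s : ℝ} (hs : s ≠ 0) {z L : ℂ}
    (h : HasSum (fun n : ℕ ↦ (((n : ℝ) ^ (-s) : ℝ) : ℂ) * z ^ n) L) :
    oneSubMulPolylog s z = (1 - z) * L := by
  have hshift : HasSum (fun n : ℕ ↦ (((n + 1 : ℝ) ^ (-s) : ℝ) : ℂ) * z ^ (n + 1)) L := by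
    have := (hasSum_nat_add_iff' 1).2 h
    simpa [Real.zero_rpow (neg_ne_zero.2 hs)] using this
  rw [sub_mul, one_mul, ← (hshift.sub (h.mul_left z)).tsum_eq, oneSubMulPolylog]
  congr 1 with n
  push_cast
  ring

lemma oneSubMulPolylog_one_of_norm_lt_one {z : ℂ} (hz : ‖z‖ < 1) :
    oneSubMulPolylog 1 z = (1 - z) * -log (1 - z) := by
  refine oneSubMulPolylog_eq_of_hasSum one_ne_zero ?_
  convert hasSum_taylorSeries_neg_log hz using 2 with n
  simp [Real.rpow_neg_one, div_eq_inv_mul]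

lemma one_sub_mem_slitPlane {z : ℂ} (hz : ‖z‖ ≤ 1) (hz₁ : z ≠ 1) : 1 - z ∈ slitPlane := by
  contrapose! hz₁
  obtain ⟨hre, him⟩ : 1 ≤ z.re ∧ z.im = 0 := by
    simpa [mem_slitPlane_iff, not_or] using hz₁
  exact Complex.ext (le_antisymm ((re_le_norm z).trans hz) hre) him

lemma oneSubMulPolylog_one {z : ℂ} (hz : ‖z‖ ≤ 1) (hz₁ : z ≠ 1) :
    oneSubMulPolylog 1 z = (1 - z) * -log (1 - z) := by
  refine EqOn.of_subset_closure (f := oneSubMulPolylog 1) (g := fun w ↦ (1 - w) * -log (1 - w))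
    (s := Metric.ball 0 1) (t := Metric.closedBall 0 1 \ {1})
    (fun w hw ↦ oneSubMulPolylog_one_of_norm_lt_one (by simpa using hw)) ?_ ?_ ?_ ?_
    ⟨by simpa using hz, hz₁⟩
  · exact continuousOn_oneSubMulPolylog.comp (f := fun w : ℂ ↦ ((1 : ℝ), w))
      (s := Metric.closedBall 0 1 \ {1}) (by fun_prop) fun w hw ↦ ⟨by norm_num, hw.1⟩
  · exact .mul (by fun_prop) <| .neg <| .clog (by fun_prop) fun w hw ↦
      one_sub_mem_slitPlane (by simpa using hw.1) hw.2
  · rintro w hw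
    refine ⟨Metric.ball_subset_closedBall hw, ?_⟩
    rintro rfl
    simp at hw
  · rw [closure_ball _ one_ne_zero]
    exact sdiff_subset

lemma oneSubMulPolylog_toCircle (a : UnitAddCircle) {s : ℝ} (hs : 1 < s) :
    oneSubMulPolylog s a.toCircle = (1 - a.toCircle) * expZeta a s := by
  induction a using QuotientAddGroup.induction_on with | H a =>
  refine oneSubMulPolylog_eq_of_hasSum (by linarith) ?_
  convert hasSum_expZeta_of_one_lt_re a (s := s) (by simpa) using 2 with n
  rw [AddCircle.toCircle_apply_mk, Circle.coe_exp, ← exp_nat_mul, ofReal_cpow n.cast_nonneg,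
    ofReal_neg, cpow_neg, ofReal_natCast, ← div_eq_inv_mul]
  push_cast
  ring_nf

lemma norm_toCircle_le_one (a : UnitAddCircle) : ‖(a.toCircle : ℂ)‖ ≤ 1 :=
  (Circle.norm_coe _).le

lemma toCircle_ne_one {a : UnitAddCircle} (ha : a ≠ 0) : (a.toCircle : ℂ) ≠ 1 := by
  rwa [Ne, Circle.coe_eq_one, ← AddCircle.toCircle_zero (T := 1),
    (AddCircle.injective_toCircle one_ne_zero).eq_iff]

theorem expZeta_apply_one {a : UnitAddCircle} (ha : a ≠ 0) :
    expZeta a 1 = -log (1 - a.toCircle) := by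
  have hz₁ := toCircle_ne_one ha
  have hlimit : oneSubMulPolylog 1 a.toCircle = (1 - a.toCircle) * expZeta a (1 : ℝ) := by
    refine EqOn.of_subset_closure (s := Ioc 1 2) (t := Icc (1 : ℝ) 2)
      (f := fun s : ℝ ↦ oneSubMulPolylog s a.toCircle)
      (g := fun s : ℝ ↦ (1 - a.toCircle) * expZeta a s)
      (fun s hs ↦ oneSubMulPolylog_toCircle a hs.1) ?_ ?_ Ioc_subset_Icc_self ?_ (by norm_num)
    · exact continuousOn_oneSubMulPolylog.comp (f := fun s : ℝ ↦ (s, (a.toCircle : ℂ)))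
        (by fun_prop) fun s hs ↦ ⟨hs, by simp [norm_toCircle_le_one]⟩
    · exact (continuous_const.mul ((differentiable_expZeta_of_ne_zero ha).continuous.comp
        continuous_ofReal)).continuousOn
    · rw [closure_Ioc (by norm_num)]
  rw [oneSubMulPolylog_one (norm_toCircle_le_one a) hz₁, ofReal_one] at hlimit
  exact (mul_left_cancel₀ (sub_ne_zero.2 hz₁.symm) hlimit).symm

/-- Dedekind's sawtooth function `((x))`: it is `0` at the integers and `{x} - 1 / 2` elsewhere.
The definition as a difference makes it visibly odd. -/
noncomputable def sawtooth (x : ℝ) : ℝ := (Int.fract x - Int.fract (-x)) / 2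

lemma sinZeta_apply_one_eq_neg_arg {a : UnitAddCircle} (ha : a ≠ 0) :
    sinZeta a 1 = (-arg (1 - a.toCircle) : ℝ) := by
  have hslit : (1 - a.toCircle : ℂ) ∈ slitPlane :=
    one_sub_mem_slitPlane (norm_toCircle_le_one a) (toCircle_ne_one ha)
  have hconj : (1 - (-a).toCircle : ℂ) = starRingEnd ℂ (1 - a.toCircle) := by
    rw [AddCircle.toCircle_neg, Circle.coe_inv_eq_conj, map_sub, map_one]
  rw [sinZeta_eq, expZeta_apply_one ha, expZeta_apply_one (neg_ne_zero.2 ha), hconj,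
    log_conj _ (mem_slitPlane_iff_arg.1 hslit).1, ← log_im]
  have := sub_conj (log (1 - a.toCircle))
  rw [div_eq_iff (by simp)]
  push_cast at this ⊢
  linear_combination -this

lemma arg_one_sub_toCircle {a : ℝ} (ha : a ∈ Ioo 0 1) :
    arg (1 - AddCircle.toCircle (a : UnitAddCircle)) = Real.pi * (a - 1 / 2) := by
  obtain ⟨ha₀, ha₁⟩ := ha
  have hpi := Real.pi_pos
  have hsin : 0 < 2 * Real.sin (Real.pi * a) :=
    mul_pos two_pos (Real.sin_pos_of_pos_of_lt_pi (by positivity) (by nlinarith))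
  have hpolar : (1 - AddCircle.toCircle (a : UnitAddCircle) : ℂ) =
      (2 * Real.sin (Real.pi * a) : ℝ) * exp ((Real.pi * (a - 1 / 2) : ℝ) * I) := by
    have hsquare : (AddCircle.toCircle (a : UnitAddCircle) : ℂ) = exp (Real.pi * a * I) ^ 2 := by
      rw [AddCircle.toCircle_apply_mk, Circle.coe_exp, ← exp_nat_mul]
      push_cast
      ring_nf
    have hrotate : exp ((Real.pi * (a - 1 / 2) : ℝ) * I) = exp (Real.pi * a * I) * -I := by
      rw [← exp_neg_pi_div_two_mul_I, ← exp_add]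
      push_cast
      ring_nf
    have hinv : exp (-(Real.pi * a) * I) * exp (Real.pi * a * I) = 1 := by
      rw [← exp_add, neg_mul, neg_add_cancel, exp_zero]
    rw [hsquare, hrotate]
    push_cast
    rw [two_sin]
    linear_combination (exp (-(Real.pi * a) * I) - exp (Real.pi * a * I)) *
      exp (Real.pi * a * I) * I_sq - hinv
  rw [hpolar, arg_real_mul _ hsin, arg_exp_mul_I, toIocMod_eq_self]
  constructor <;> nlinarith

lemma sinZeta_zero (s : ℂ) : sinZeta 0 s = 0 :=
  self_eq_neg.1 (by simpa using sinZeta_neg 0 s)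

theorem sinZeta_apply_one (a : ℝ) : sinZeta a 1 = (-Real.pi * sawtooth a : ℝ) := by
  rw [← AddCircle.coe_fract]
  by_cases ha : Int.fract a = 0
  · simp [sawtooth, ha, Int.fract_neg_eq_zero.2 ha, sinZeta_zero]
  have hfract : Int.fract a ∈ Ioo 0 1 :=
    ⟨(Int.fract_nonneg a).lt_of_ne' ha, Int.fract_lt_one a⟩
  have hne : ((Int.fract a : ℝ) : UnitAddCircle) ≠ 0 := by
    rwa [Ne, AddCircle.coe_eq_zero_iff_of_mem_Ico (Ioo_subset_Ico_self hfract)]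
  rw [sinZeta_apply_one_eq_neg_arg hne, arg_one_sub_toCircle hfract, sawtooth, Int.fract_neg ha]
  push_cast
  ring

end SinZeta

section ZModLFunction

open Finset ZMod HurwitzZeta

variable {N : ℕ} [NeZero N]

lemma sum_char_mul_apply_mul {G : ZMod N → ℂ} (hG : ∀ x, ¬IsUnit x → G x = 0)
    (χ : DirichletCharacter ℂ N) (k : ZMod N) :
    ∑ j, χ j * G (j * k) = χ⁻¹ k * ∑ j, χ j * G j := by
  by_cases hk : IsUnit k
  · obtain ⟨u, rfl⟩ := hk
    have hχ : χ⁻¹ (u : ZMod N) * χ u = 1 := by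
      rw [← MulChar.mul_apply, inv_mul_cancel, MulChar.one_apply_coe]
    rw [mul_sum, ← Equiv.sum_comp u.mulRight fun j ↦ _ * (χ j * G j)]
    refine sum_congr rfl fun j _ ↦ ?_
    rw [Units.mulRight_apply, map_mul]
    linear_combination (-χ j * G (j * u)) * hχ
  · rw [MulChar.map_nonunit _ hk, zero_mul]
    refine sum_eq_zero fun j _ ↦ ?_
    rw [hG _ fun hjk ↦ hk (isUnit_of_mul_isUnit_right hjk), mul_zero]

lemma LFunction_sum_mul {ι : Type*} [Fintype ι] (c : ι → ℂ) (Φ : ι → ZMod N → ℂ) (s : ℂ) :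
    LFunction (fun k ↦ ∑ i, c i * Φ i k) s = ∑ i, c i * LFunction (Φ i) s := by
  simp only [LFunction, sum_mul, mul_sum]
  rw [sum_comm]
  congr! 2
  ring

lemma sum_char_mul_LFunction {G : ZMod N → ℂ} (hG : ∀ x, ¬IsUnit x → G x = 0)
    (χ : DirichletCharacter ℂ N) (s : ℂ) :
    ∑ j, χ j * LFunction (fun k ↦ G (j * k)) s = (∑ j, χ j * G j) * χ⁻¹.LFunction s := by
  rw [← LFunction_sum_mul]
  simp only [sum_char_mul_apply_mul hG, DirichletCharacter.LFunction, LFunction]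
  rw [mul_left_comm, mul_sum (a := ∑ j, χ j * G j)]
  congr! 2
  ring

lemma eq_zero_of_sum_char_mul_eq_zero {G : ZMod N → ℂ} (hG : ∀ x, ¬IsUnit x → G x = 0)
    (h : ∀ χ : DirichletCharacter ℂ N, ∑ j, χ j * G j = 0) : G = 0 := by
  funext b
  by_cases hb : IsUnit b
  · have hdual : ∑ χ : DirichletCharacter ℂ N, χ b⁻¹ * ∑ j, χ j * G j = N.totient * G b := by
      simp only [mul_sum, ← mul_assoc]
      rw [sum_comm]
      simp only [← sum_mul, DirichletCharacter.sum_char_inv_mul_char_eq ℂ hb]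
      simp
    simpa [h, NeZero.ne N] using hdual
  · exact hG b hb

theorem eq_zero_of_LFunction_mul_apply_one_eq_zero {G : ZMod N → ℂ}
    (hG : ∀ x, ¬IsUnit x → G x = 0) (hsum : ∑ x, G x = 0)
    (h : ∀ j, LFunction (fun k ↦ G (j * k)) 1 = 0) : G = 0 := by
  refine eq_zero_of_sum_char_mul_eq_zero hG fun χ ↦ ?_
  obtain rfl | hχ := eq_or_ne χ 1
  · rw [← hsum]
    refine sum_congr rfl fun j _ ↦ ?_
    by_cases hj : IsUnit j
    · rw [MulChar.one_apply hj, one_mul]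
    · rw [hG j hj, mul_zero]
  · have hprod := sum_char_mul_LFunction hG χ 1
    simp only [h, mul_zero, sum_const_zero] at hprod
    exact (mul_eq_zero.1 hprod.symm).resolve_right
      (DirichletCharacter.LFunction_apply_one_ne_zero (inv_ne_one.2 hχ))

/-- The function `y ↦ sin (2πy / N)` on `ZMod N`, as the odd part of the standard additive
character. Its values at the multiples of `y` are the coefficients of the Dirichlet series
`sinZeta (y / N)`. -/
noncomputable def stdSin (y : ZMod N) : ℂ := (stdAddChar y - stdAddChar (-y)) / (2 * Complex.I)

lemma stdSin_neg (y : ZMod N) : stdSin (-y) = -stdSin y := by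
  rw [stdSin, stdSin, neg_neg, ← neg_div, neg_sub]

lemma LFunction_stdSin_mul (y : ZMod N) :
    LFunction (fun k ↦ stdSin (y * k)) 1 = sinZeta (toAddCircle y) 1 := by
  obtain rfl | hy := eq_or_ne y 0
  · simp [LFunction, stdSin, sinZeta_zero]
  · rw [sinZeta_eq, ← map_neg, ← LFunction_stdAddChar_eq_expZeta _ _ (.inl hy),
      ← LFunction_stdAddChar_eq_expZeta _ _ (.inl (neg_ne_zero.2 hy))]
    simp only [LFunction, stdSin, ← mul_sub, ← sum_sub_distrib, neg_mul, ← sub_mul,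
      mul_div_assoc, sum_div]
    congr! 2
    ring

lemma stdSin_intCast_mul {m d : ℕ} [NeZero d] (hN : N = m * d) (i : ℤ) :
    stdSin ((m * i : ℤ) : ZMod N) = stdSin (i : ZMod d) := by
  have hchar (i : ℤ) : stdAddChar ((m * i : ℤ) : ZMod N) = stdAddChar (i : ZMod d) := by
    have hm : (m : ℂ) ≠ 0 := by
      intro hm
      exact NeZero.ne N (by rw [hN, Nat.cast_eq_zero.1 hm, zero_mul])
    have hd : (d : ℂ) ≠ 0 := NeZero.ne _
    rw [stdAddChar_coe, stdAddChar_coe, hN]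
    push_cast
    congr 1
    field
  rw [stdSin, stdSin, ← Int.cast_neg, ← mul_neg, hchar, hchar, Int.cast_neg]

lemma exists_eq_mul_of_not_isUnit {k : ZMod N} (hk : ¬IsUnit k) :
    ∃ m d l : ℕ, N = m * d ∧ d < N ∧ k = ((m * l : ℕ) : ZMod N) := by
  obtain ⟨d, hd⟩ := Nat.gcd_dvd_right k.val N
  obtain ⟨l, hl⟩ := Nat.gcd_dvd_left k.val N
  refine ⟨_, d, l, hd, ?_, by rw [← hl, natCast_zmod_val]⟩
  have hgcd : 1 < k.val.gcd N := by
    refine lt_of_le_of_ne (Nat.gcd_pos_of_pos_right _ (NeZero.pos N)) fun h ↦ hk ?_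
    rw [← natCast_zmod_val k, isUnit_iff_coprime]
    exact h.symm
  have hpos : 0 < d := Nat.pos_of_ne_zero fun h ↦ NeZero.ne N (by rw [hd, h, mul_zero])
  exact (lt_mul_of_one_lt_left hpos hgcd).trans_eq hd.symm

variable {ι : Type*} [Fintype ι]

lemma LFunction_sum_mul_stdSin (c : ι → ℂ) (x : ι → ℤ) (j : ℤ) :
    LFunction (fun k : ZMod N ↦ ∑ i, c i * stdSin ((x i : ZMod N) * ((j : ZMod N) * k))) 1 =
      -Real.pi * ∑ i, c i * sawtooth (j * x i / N) := by
  rw [LFunction_sum_mul c fun i (k : ZMod N) ↦ stdSin ((x i : ZMod N) * ((j : ZMod N) * k)),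
    mul_sum]
  refine sum_congr rfl fun i _ ↦ ?_
  simp only [← mul_assoc]
  rw [LFunction_stdSin_mul, ← Int.cast_mul, toAddCircle_intCast, sinZeta_apply_one, mul_comm (x i)]
  push_cast
  ring

theorem sum_mul_stdSin_eq_zero_of_sum_mul_sawtooth_eq_zero {N : ℕ} [hN₀ : NeZero N]
    (c : ι → ℂ) (x : ι → ℤ)
    (h : ∀ j : ℤ, ∑ i, c i * (sawtooth (j * x i / N) : ℂ) = 0) (k : ZMod N) :
    ∑ i, c i * stdSin ((x i : ZMod N) * k) = 0 := by
  induction N using Nat.strong_induction_on generalizing hN₀ with | _ N ih =>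
  refine congrFun (eq_zero_of_LFunction_mul_apply_one_eq_zero
    (G := fun k ↦ ∑ i, c i * stdSin ((x i : ZMod N) * k)) (fun k hk ↦ ?_) ?_ fun j ↦ ?_) k
  · obtain ⟨m, d, l, hN, hd, rfl⟩ := exists_eq_mul_of_not_isUnit hk
    have hmd : m * d ≠ 0 := hN ▸ NeZero.ne N
    have : NeZero d := ⟨right_ne_zero_of_mul hmd⟩
    have hm : (m : ℝ) ≠ 0 := Nat.cast_ne_zero.2 (left_ne_zero_of_mul hmd)
    have hscale (i : ι) : stdSin ((x i : ZMod N) * ((m * l : ℕ) : ZMod N)) =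
        stdSin ((x i : ZMod d) * (l : ZMod d)) := by
      convert stdSin_intCast_mul hN (x i * l) using 2 <;> push_cast <;> ring
    simp only [hscale]
    refine ih d hd (fun j ↦ ?_) l
    convert h (m * j) using 5 with i
    rw [hN]
    push_cast
    field
  · rw [sum_comm]
    refine sum_eq_zero fun i _ ↦ ?_
    rw [← mul_sum, Function.Odd.sum_eq_zero fun k ↦ ?_, mul_zero]
    rw [mul_neg, stdSin_neg]
  · obtain ⟨j, rfl⟩ := ZMod.intCast_surjective j
    rw [LFunction_sum_mul_stdSin, h, mul_zero]

lemma sum_ite_neg_eq_of_sum_mul_stdSin_eq_zero (c : ι → ℂ) (x : ι → ZMod N)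
    (h : ∀ k, ∑ i, c i * stdSin (x i * k) = 0) (y : ZMod N) :
    (∑ i, if x i = -y then c i else 0) = ∑ i, if x i = y then c i else 0 := by
  have hdft (k : ZMod N) : dft (fun y ↦ ∑ i, if x i = y then c i else 0) k =
      ∑ i, c i * stdAddChar (-(x i * k)) := by
    simp only [dft_apply, smul_eq_mul, mul_sum]
    rw [sum_comm]
    simp [mul_comm]
  have hdft_even : Function.Even (dft (fun y ↦ ∑ i, if x i = y then c i else 0)) := by
    intro k
    have hk := h k
    simp only [stdSin, mul_div_assoc', ← sum_div, mul_sub, sum_sub_distrib] at hk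
    rw [hdft, hdft, ← sub_eq_zero]
    simpa using hk
  exact dft_even_iff.1 hdft_even y

theorem map_neg_eq_of_sum_sawtooth_eq_zero (x : ι → ℤ)
    (h : ∀ j : ℤ, ∑ i, sawtooth (j * x i / N) = 0) :
    (univ.val.map fun i ↦ -(x i : ZMod N)) = univ.val.map fun i ↦ (x i : ZMod N) := by
  have hsin : ∀ k : ZMod N, ∑ i, (1 : ℂ) * stdSin ((x i : ZMod N) * k) = 0 :=
    sum_mul_stdSin_eq_zero_of_sum_mul_sawtooth_eq_zero _ x fun j ↦ by
      simpa using congrArg ((↑) : ℝ → ℂ) (h j)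
  ext y
  have hy := sum_ite_neg_eq_of_sum_mul_stdSin_eq_zero _ _ hsin y
  rw [sum_boole, sum_boole, Nat.cast_inj] at hy
  simp only [Multiset.count_map, eq_comm (a := y), neg_eq_iff_eq_neg]
  exact hy

end ZModLFunction

section Pairing

lemma ne_neg_self_of_isUnit {R : Type*} [Ring R] (h : (1 : R) ≠ -1) {u : R} (hu : IsUnit u) :
    u ≠ -u := by
  contrapose! h
  exact hu.mul_left_cancel (by rw [mul_one, mul_neg, mul_one, ← h])

lemma even_card_of_map_neg_eq {A : Type*} [InvolutiveNeg A] {M : Multiset A}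
    (hM : M.map Neg.neg = M) (hne : ∀ x ∈ M, x ≠ -x) : Even M.card := by
  classical
  have hcount (x : A) : M.count (-x) = M.count x := by
    conv_lhs => rw [← hM]
    exact Multiset.count_map_eq_count' _ _ neg_injective x
  rw [← ZMod.natCast_eq_zero_iff_even, ← Multiset.toFinset_sum_count_eq, Nat.cast_sum]
  refine Finset.sum_involution (fun x _ ↦ -x) (fun x _ ↦ ?_) (fun x hx _ ↦ ?_) (fun x hx ↦ ?_)
    fun x _ ↦ neg_neg x
  · rw [hcount, CharTwo.add_self_eq_zero]
  · exact (hne x (Multiset.mem_toFinset.1 hx)).symm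
  · rw [Multiset.mem_toFinset, ← Multiset.count_pos, hcount, Multiset.count_pos]
    exact Multiset.mem_toFinset.1 hx

lemma add_eq_zero_of_map_neg_pair_eq {A : Type*} [AddGroup A] {b c : A} (hb : b ≠ -b)
    (h : ({b, c} : Multiset A).map Neg.neg = {b, c}) : b + c = 0 := by
  have hmem : -b ∈ ({b, c} : Multiset A) := h ▸ by simp
  have hbc : -b = c := by simpa [hb.symm] using hmem
  rw [← hbc, add_neg_cancel]

lemma add_eq_zero_of_map_neg_eq {A : Type*} [AddGroup A] {u b c : A} (hb : b ≠ -b)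
    (h : ({u, b, c, -u} : Multiset A).map Neg.neg = {u, b, c, -u}) : b + c = 0 := by
  refine add_eq_zero_of_map_neg_pair_eq hb ?_
  have hsplit : ({u, b, c, -u} : Multiset A) = {u, -u} + {b, c} := by
    simp only [Multiset.insert_eq_cons, ← Multiset.singleton_add]
    abel
  have hu : ({u, -u} : Multiset A).map Neg.neg = {u, -u} := by
    simpa using Multiset.pair_comm (-u) u
  rw [hsplit, Multiset.map_add, hu] at h
  exact add_left_cancel h

lemma eq_and_add_eq_zero_of_map_neg_eq {A : Type*} [AddGroup A] {u a b c : A} (hu : u ≠ -u)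
    (ha : a ≠ -a) (hb : b ≠ -b)
    (h : ({a, b, c, -u} : Multiset A).map Neg.neg = {a, b, c, -u}) :
    a = u ∧ b + c = 0 ∨ b = u ∧ a + c = 0 ∨ c = u ∧ a + b = 0 := by
  have hmem : u ∈ ({a, b, c, -u} : Multiset A) := h ▸ by simp
  have heq : a = u ∨ b = u ∨ c = u := by simpa [hu, eq_comm] using hmem
  rcases heq with rfl | rfl | rfl
  · exact .inl ⟨rfl, add_eq_zero_of_map_neg_eq hb h⟩
  · refine .inr (.inl ⟨rfl, add_eq_zero_of_map_neg_eq (u := b) ha ?_⟩)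
    simpa only [Multiset.insert_eq_cons, Multiset.cons_swap a b] using h
  · refine .inr (.inr ⟨rfl, add_eq_zero_of_map_neg_eq (u := c) ha ?_⟩)
    simpa only [Multiset.insert_eq_cons, Multiset.cons_swap b c, Multiset.cons_swap a c] using h

lemma eq_one_and_add_eq_zero_of_isUnit {R : Type*} [Ring R] {a b c d e : R}
    (hone : (1 : R) ≠ -1) (ha : IsUnit a) (hb : IsUnit b) (hc : IsUnit c) (he : ¬IsUnit e)
    (h : ({a, b, c, d, -e, -1} : Multiset R).map Neg.neg = {a, b, c, d, -e, -1}) :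
    a = 1 ∧ b + c = 0 ∨ b = 1 ∧ a + c = 0 ∨ c = 1 ∧ a + b = 0 := by
  classical
  set M : Multiset R := {a, b, c, d, -e, -1} with hM
  have hunits : (M.filter IsUnit).map Neg.neg = M.filter IsUnit := by
    conv_rhs => rw [← h, Multiset.filter_map]
    simp
  have heven : Even (M.filter IsUnit).card :=
    even_card_of_map_neg_eq hunits fun u hu ↦
      ne_neg_self_of_isUnit hone (Multiset.mem_filter.1 hu).2
  have hd : ¬IsUnit d := by
    intro hd
    have hcard : (M.filter IsUnit).card = 5 := by
      simp [hM, Multiset.filter_singleton, ha, hb, hc, hd, he]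
    rw [hcard] at heven
    exact absurd heven (by decide)
  refine eq_and_add_eq_zero_of_map_neg_eq hone (ne_neg_self_of_isUnit hone ha)
    (ne_neg_self_of_isUnit hone hb) ?_
  simpa [hM, Multiset.filter_singleton, ha, hb, hc, hd, he] using hunits

end Pairing

section FractionalParts

variable {N : ℕ}

lemma isUnit_intCast_iff_gcd_eq_one (a : ℤ) : IsUnit (a : ZMod N) ↔ a.gcd N = 1 := by
  rw [ZMod.coe_int_isUnit_iff_isCoprime, isCoprime_comm, Int.isCoprime_iff_gcd_eq_one]

lemma eq_one_of_isUnit_of_one_eq_neg_one (h : (1 : ZMod N) = -1) {u : ZMod N} (hu : IsUnit u) :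
    u = 1 := by
  have hdvd : N ∣ 2 := by
    rw [← ZMod.natCast_eq_zero_iff, Nat.cast_two, ← one_add_one_eq_two]
    exact add_eq_zero_iff_eq_neg.2 h
  obtain rfl | rfl := (Nat.dvd_prime Nat.prime_two).1 hdvd
  · exact Subsingleton.elim _ _
  · revert hu u
    decide

variable [NeZero N]

lemma fract_intCast_div_natCast_eq_val_div {K : Type*} [Field K] [LinearOrder K]
    [IsStrictOrderedRing K] [FloorRing K] (a : ℤ) :
    Int.fract (a / N : K) = (a : ZMod N).val / N := by
  rw [Int.fract_div_intCast_eq_div_intCast_mod, ← ZMod.val_intCast, Int.cast_natCast]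

lemma sawtooth_intCast_div_natCast (a : ℤ) :
    sawtooth (a / N) = ((a : ZMod N).val - (-a : ZMod N).val) / (2 * N) := by
  rw [sawtooth, ← neg_div, ← Int.cast_neg, fract_intCast_div_natCast_eq_val_div,
    fract_intCast_div_natCast_eq_val_div, Int.cast_neg, ← sub_div, div_div, mul_comm]

lemma val_add_eq_of_fract_add_eq {a₁ a₂ a₃ a₄ e : ℤ} {t : ZMod N}
    (h : Int.fract ((t.val : ℚ) * a₁ / N) + Int.fract ((t.val : ℚ) * a₂ / N) +
      Int.fract ((t.val : ℚ) * a₃ / N) + Int.fract ((t.val : ℚ) * a₄ / N) =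
      Int.fract ((t.val : ℚ) * e / N) + (t.val : ℚ) / N + 1) :
    (t * a₁).val + (t * a₂).val + (t * a₃).val + (t * a₄).val = (t * e).val + t.val + N := by
  have hfract (a : ℤ) : Int.fract ((t.val : ℚ) * a / N) = (t * a).val / N := by
    simpa using fract_intCast_div_natCast_eq_val_div (K := ℚ) (N := N) (t.val * a)
  have hN : (N : ℚ) ≠ 0 := NeZero.ne _
  simp only [hfract] at h
  field_simp at h
  exact_mod_cast h

lemma map_neg_eq_of_val_add_eq {a₁ a₂ a₃ a₄ e : ℤ}
    (h : ∀ t : ZMod N, t ≠ 0 →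
      (t * a₁).val + (t * a₂).val + (t * a₃).val + (t * a₄).val = (t * e).val + t.val + N) :
    ({(a₁ : ZMod N), ↑a₂, ↑a₃, ↑a₄, -↑e, -1} : Multiset (ZMod N)).map Neg.neg =
      {(a₁ : ZMod N), ↑a₂, ↑a₃, ↑a₄, -↑e, -1} := by
  have hsaw (j : ℤ) : ∑ i, sawtooth (j * (![a₁, a₂, a₃, a₄, -e, -1] i : ℤ) / N) = 0 := by
    simp only [← Int.cast_mul, sawtooth_intCast_div_natCast, ← Finset.sum_div]
    rw [div_eq_zero_iff]
    left
    by_cases hj : (j : ZMod N) = 0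
    · simp [hj]
    have hpos := congrArg ((↑) : ℕ → ℝ) (h j hj)
    have hneg := congrArg ((↑) : ℕ → ℝ) (h (-j) (neg_ne_zero.2 hj))
    push_cast [neg_mul] at hpos hneg
    simp only [Fin.sum_univ_six, Matrix.cons_val, mul_neg, mul_one, neg_neg, Int.cast_neg,
      Int.cast_mul, Int.cast_one]
    linear_combination hpos - hneg
  simpa [Fin.univ_succ] using map_neg_eq_of_sum_sawtooth_eq_zero (N := N) _ hsaw

lemma val_add_val_eq_of_add_eq_zero {b c : ZMod N} (hb : b ≠ 0) (h : b + c = 0) :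
    b.val + c.val = N := by
  have : NeZero b := ⟨hb⟩
  rw [← neg_eq_of_add_eq_zero_right h, ZMod.val_neg_of_ne_zero, Nat.add_sub_cancel' b.val_lt.le]

theorem eq_one_and_add_eq_zero_of_val_add_eq {a₁ a₂ a₃ a₄ e : ℤ}
    (h₁ : IsUnit (a₁ : ZMod N)) (h₂ : IsUnit (a₂ : ZMod N)) (h₃ : IsUnit (a₃ : ZMod N))
    (he : ¬IsUnit (e : ZMod N)) (h : ∀ t : ZMod N, t ≠ 0 →
      (t * a₁).val + (t * a₂).val + (t * a₃).val + (t * a₄).val = (t * e).val + t.val + N) :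
    (a₁ : ZMod N) = 1 ∧ (a₂ + a₃ : ZMod N) = 0 ∨ (a₂ : ZMod N) = 1 ∧ (a₁ + a₃ : ZMod N) = 0 ∨
      (a₃ : ZMod N) = 1 ∧ (a₁ + a₂ : ZMod N) = 0 := by
  by_cases hone : (1 : ZMod N) = -1
  · refine .inl ⟨eq_one_of_isUnit_of_one_eq_neg_one hone h₁, ?_⟩
    rw [eq_one_of_isUnit_of_one_eq_neg_one hone h₂, eq_one_of_isUnit_of_one_eq_neg_one hone h₃]
    exact add_eq_zero_iff_eq_neg.2 hone
  · exact eq_one_and_add_eq_zero_of_isUnit hone h₁ h₂ h₃ he (map_neg_eq_of_val_add_eq h)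

lemma eq_of_val_add_eq {a b c d e : ZMod N} [Nontrivial (ZMod N)] (ha : a = 1) (hb : IsUnit b)
    (hbc : b + c = 0)
    (h : a.val + b.val + c.val + d.val = e.val + (1 : ZMod N).val + N) : d = e := by
  have hsum := val_add_val_eq_of_add_eq_zero hb.ne_zero hbc
  rw [ha] at h
  exact ZMod.val_injective N (by omega)

end FractionalParts

theorem stmt_6_general (r : ℕ) (hr : 0 < r) (a₁ a₂ a₃ a₄ e : ℤ)
    (h₁ : Int.gcd a₁ r = 1) (h₂ : Int.gcd a₂ r = 1) (h₃ : Int.gcd a₃ r = 1)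
    (he : 1 < Int.gcd e r)
    (hsum : ∀ j : ℕ, 1 ≤ j → j ≤ r - 1 →
      Int.fract ((j : ℚ) * (a₁ : ℚ) / (r : ℚ)) + Int.fract ((j : ℚ) * (a₂ : ℚ) / (r : ℚ)) +
      Int.fract ((j : ℚ) * (a₃ : ℚ) / (r : ℚ)) + Int.fract ((j : ℚ) * (a₄ : ℚ) / (r : ℚ)) =
      Int.fract ((j : ℚ) * (e : ℚ) / (r : ℚ)) + (j : ℚ) / (r : ℚ) + 1) :
    a₄ ≡ e [ZMOD (r : ℤ)] ∧
    ∃ i j k : Fin 3, ({i, j, k} : Finset (Fin 3)) = Finset.univ ∧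
      (![a₁, a₂, a₃] i) ≡ 1 [ZMOD (r : ℤ)] ∧
      (![a₁, a₂, a₃] j) + (![a₁, a₂, a₃] k) ≡ 0 [ZMOD (r : ℤ)] := by
  have : NeZero r := ⟨hr.ne'⟩
  have hval (t : ZMod r) (ht : t ≠ 0) :=
    val_add_eq_of_fract_add_eq (hsum t.val (Nat.one_le_iff_ne_zero.2 (by simpa using ht))
      (Nat.le_sub_one_of_lt t.val_lt))
  rw [← isUnit_intCast_iff_gcd_eq_one] at h₁ h₂ h₃
  replace he : ¬IsUnit (e : ZMod r) := mt (isUnit_intCast_iff_gcd_eq_one e).1 he.ne'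
  have : Nontrivial (ZMod r) :=
    not_subsingleton_iff_nontrivial.1 fun _ ↦ he (isUnit_of_subsingleton _)
  have hone := hval 1 one_ne_zero
  simp only [one_mul] at hone
  simp only [← ZMod.intCast_eq_intCast_iff, Int.cast_add, Int.cast_one, Int.cast_zero]
  rcases eq_one_and_add_eq_zero_of_val_add_eq h₁ h₂ h₃ he hval with
    ⟨ha, hbc⟩ | ⟨ha, hbc⟩ | ⟨ha, hbc⟩
  · exact ⟨eq_of_val_add_eq ha h₂ hbc hone, 0, 1, 2, by decide, ha, hbc⟩
  · exact ⟨eq_of_val_add_eq ha h₁ hbc (by omega), 1, 0, 2, by decide, ha, hbc⟩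
  · exact ⟨eq_of_val_add_eq ha h₁ hbc (by omega), 2, 0, 1, by decide, ha, hbc⟩

/-- Terminal lemma, case gcd(e,r) > 1. -/
theorem stmt_6 (r : ℕ) (hr : 0 < r) (a₁ a₂ a₃ a₄ e : ℤ)
    (h₁ : Int.gcd a₁ r = 1) (h₂ : Int.gcd a₂ r = 1) (h₃ : Int.gcd a₃ r = 1)
    (h₄ : Int.gcd a₄ r = Int.gcd e r) (he : 1 < Int.gcd e r)
    (hsum : ∀ j : ℕ, 1 ≤ j → j ≤ r - 1 →
      Int.fract ((j : ℚ) * (a₁ : ℚ) / (r : ℚ)) + Int.fract ((j : ℚ) * (a₂ : ℚ) / (r : ℚ)) +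
      Int.fract ((j : ℚ) * (a₃ : ℚ) / (r : ℚ)) + Int.fract ((j : ℚ) * (a₄ : ℚ) / (r : ℚ)) =
      Int.fract ((j : ℚ) * (e : ℚ) / (r : ℚ)) + (j : ℚ) / (r : ℚ) + 1) :
    a₄ ≡ e [ZMOD (r : ℤ)] ∧
    ∃ i j k : Fin 3, ({i, j, k} : Finset (Fin 3)) = Finset.univ ∧
      (![a₁, a₂, a₃] i) ≡ 1 [ZMOD (r : ℤ)] ∧
      (![a₁, a₂, a₃] j) + (![a₁, a₂, a₃] k) ≡ 0 [ZMOD (r : ℤ)] := by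
  exact stmt_6_general r hr a₁ a₂ a₃ a₄ e h₁ h₂ h₃ he hsum
end

section
/- Let r be a positive integer and a₁, a₂, a₃, a₄, e integers with gcd(a_i, r) = 1 for i = 1,2,3, gcd(a₄,r) = gcd(e,r) = 1, and suppose that for every integer j with 1 ≤ j ≤ r-1 one has {j a₁/r} + {j a₂/r} + {j a₃/r} + {j a₄/r} = {j e/r} + j/r + 1. Set a₅ := -e and a₆ := -1. Then there is a partition of {1,...,6} into three pairs {i₁,i₂}, {i₃,i₄}, {i₅,i₆} such that a_{i₁}+a_{i₂} ≡ a_{i₃}+a_{i₄} ≡ a_{i₅}+a_{i₆} ≡ 0 (mod r). -/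
/-!
For an odd Dirichlet character `χ` mod `r`, the cotangent expansion of the odd Hurwitz zeta function
at `1` turns `L(1, χ)` into a nonzero multiple of the first moment `∑ j, j.val * 𝓕 χ j`, so this
moment is nonzero. Since `{-x} = 1 - {x}` off the integers, the hypothesis says that
`∑ i, (aᵢ * j).val` takes the same value at all `j ≠ 0`, so it is an even function of `j`. Pairing
it with the odd function `𝓕 χ` gives `(∑ i, χ aᵢ) * ∑ j, j.val * 𝓕 χ j = 0`, hence
`∑ i, χ aᵢ = 0` for every odd `χ`. By orthogonality of characters, `b` and `-b` occur equally often
among the residues `aᵢ`. For `r > 2` no unit is its own negative, so the residues split into pairs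
`{b, -b}`; for `r ≤ 2` all units coincide.
-/

open Filter Topology Finset ZMod HurwitzZeta

section OddHurwitzZeta

lemma abs_rpow_neg_sub_rpow_neg_le {a b m s : ℝ} (hm : 0 < m) (ha : m ≤ a) (hb : m ≤ b)
    (hs : 0 ≤ s) : |a ^ (-s) - b ^ (-s)| ≤ s * m ^ (-s - 1) * |a - b| := by
  refine (convex_Ici m).norm_image_sub_le_of_norm_hasDerivWithin_le
    (f := fun y ↦ y ^ (-s)) (f' := fun y ↦ -s * y ^ (-s - 1)) (fun y hy ↦ ?_) (fun y hy ↦ ?_) hb ha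
  · exact (Real.hasDerivAt_rpow_const (Or.inl (hm.trans_le hy).ne')).hasDerivWithinAt
  · have hy0 : 0 ≤ y ^ (-s - 1) := Real.rpow_nonneg (hm.le.trans hy) _
    rw [Real.norm_eq_abs, abs_mul, abs_neg, abs_of_nonneg hs, abs_of_nonneg hy0]
    gcongr s * ?_
    exact Real.rpow_le_rpow_of_nonpos hm hy (by linarith)

lemma rpow_le_rpow_add_rpow {m p q t : ℝ} (hm : 0 < m) (ht : t ∈ Set.Icc p q) :
    m ^ t ≤ m ^ p + m ^ q := by
  rcases le_total m 1 with h | h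
  · exact (Real.rpow_le_rpow_of_exponent_ge hm h ht.1).trans
      (le_add_of_nonneg_right (Real.rpow_nonneg hm.le q))
  · exact (Real.rpow_le_rpow_of_exponent_le h ht.2).trans
      (le_add_of_nonneg_left (Real.rpow_nonneg hm.le p))

lemma summable_natCast_add_rpow {c p : ℝ} (hc : 0 < c) (hp : p < -1) :
    Summable fun n : ℕ ↦ ((n : ℝ) + c) ^ p := by
  refine ((Real.summable_one_div_nat_add_rpow c (-p)).2 (by linarith)).congr fun n ↦ ?_
  rw [abs_of_pos (by positivity), Real.rpow_neg (by positivity), one_div, inv_inv]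

/-- The `n`-th term of the Dirichlet series of `hurwitzZetaOdd x s`, for `0 < x < 1` and real `s`.
The difference is kept as a single term so that the series converges absolutely at `s = 1`. -/
noncomputable def hurwitzOddTerm (x s : ℝ) (n : ℕ) : ℝ :=
  ((n + x) ^ (-s) - (n + 1 - x) ^ (-s)) / 2

variable {x s : ℝ}

lemma abs_hurwitzOddTerm_le (hx : x ∈ Set.Ioo 0 1) (hs : s ∈ Set.Icc 1 2) (n : ℕ) :
    |hurwitzOddTerm x s n| ≤
      (n + min x (1 - x)) ^ (-3 : ℝ) + (n + min x (1 - x)) ^ (-2 : ℝ) := by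
  obtain ⟨hx0, hx1⟩ := hx
  obtain ⟨hs1, hs2⟩ := hs
  set m : ℝ := n + min x (1 - x)
  have hm0 : 0 < m := by
    have := lt_min hx0 (sub_pos.2 hx1)
    positivity
  have hdiff : |(n + x) ^ (-s) - (n + 1 - x) ^ (-s)| ≤ s * m ^ (-s - 1) * |n + x - (n + 1 - x)| :=
    abs_rpow_neg_sub_rpow_neg_le hm0 (by linarith [min_le_left x (1 - x)])
      (by linarith [min_le_right x (1 - x)]) (by linarith)
  have hgap : |n + x - (n + 1 - x)| ≤ 1 := abs_le.2 ⟨by linarith, by linarith⟩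
  calc |hurwitzOddTerm x s n| = |(n + x) ^ (-s) - (n + 1 - x) ^ (-s)| / 2 := by
        rw [hurwitzOddTerm, abs_div, abs_two]
    _ ≤ 2 * m ^ (-s - 1) * 1 / 2 := by
        refine div_le_div_of_nonneg_right (hdiff.trans ?_) two_pos.le
        gcongr
    _ = m ^ (-s - 1) := by ring
    _ ≤ m ^ (-3 : ℝ) + m ^ (-2 : ℝ) :=
        rpow_le_rpow_add_rpow hm0 ⟨by linarith, by linarith⟩

lemma summable_hurwitzOddTerm_bound (hx : x ∈ Set.Ioo 0 1) :
    Summable fun n : ℕ ↦ (n + min x (1 - x)) ^ (-3 : ℝ) + (n + min x (1 - x)) ^ (-2 : ℝ) := by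
  have hmin : 0 < min x (1 - x) := lt_min hx.1 (sub_pos.2 hx.2)
  exact (summable_natCast_add_rpow hmin (by norm_num)).add
    (summable_natCast_add_rpow hmin (by norm_num))

lemma continuous_hurwitzOddTerm (hx : x ∈ Set.Ioo 0 1) (n : ℕ) :
    Continuous fun s ↦ hurwitzOddTerm x s n := by
  have hx0 : (n + x : ℝ) ≠ 0 := by linarith [hx.1, n.cast_nonneg (α := ℝ)]
  have hx1 : (n + 1 - x : ℝ) ≠ 0 := by linarith [hx.2, n.cast_nonneg (α := ℝ)]
  unfold hurwitzOddTerm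
  fun_prop (disch := assumption)

lemma hurwitzZetaOdd_eq_tsum_of_one_lt (hx : x ∈ Set.Ioo 0 1) (hs : 1 < s) :
    hurwitzZetaOdd (x : UnitAddCircle) s = (∑' n, hurwitzOddTerm x s n : ℝ) := by
  rw [← (hasSum_nat_hurwitzZetaOdd_of_mem_Icc ⟨hx.1.le, hx.2.le⟩ (by simpa using hs)).tsum_eq,
    Complex.ofReal_tsum]
  refine tsum_congr fun n ↦ ?_
  have hx0 : (0 : ℝ) ≤ n + x := by linarith [hx.1, n.cast_nonneg (α := ℝ)]
  have hx1 : (0 : ℝ) ≤ n + 1 - x := by linarith [hx.2, n.cast_nonneg (α := ℝ)]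
  rw [hurwitzOddTerm, Real.rpow_neg hx0, Real.rpow_neg hx1]
  push_cast [Complex.ofReal_cpow hx0, Complex.ofReal_cpow hx1]
  simp only [one_div]

lemma hurwitzZetaOdd_one_eq_tsum (hx : x ∈ Set.Ioo 0 1) :
    hurwitzZetaOdd (x : UnitAddCircle) 1 = (∑' n, hurwitzOddTerm x 1 n : ℝ) := by
  have hzeta : Tendsto (fun s : ℝ ↦ hurwitzZetaOdd (x : UnitAddCircle) s) (𝓝[>] 1)
      (𝓝 (hurwitzZetaOdd (x : UnitAddCircle) (1 : ℝ))) :=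
    (((differentiable_hurwitzZetaOdd x).continuous.comp
      Complex.continuous_ofReal).tendsto 1).mono_left nhdsWithin_le_nhds
  have hseries : Tendsto (fun s ↦ ∑' n, hurwitzOddTerm x s n) (𝓝[>] 1)
      (𝓝 (∑' n, hurwitzOddTerm x 1 n)) := by
    refine tendsto_tsum_of_dominated_convergence (summable_hurwitzOddTerm_bound hx)
      (fun n ↦ ((continuous_hurwitzOddTerm hx n).tendsto 1).mono_left nhdsWithin_le_nhds) ?_
    filter_upwards [Ioo_mem_nhdsGT one_lt_two] with s hs n
    exact abs_hurwitzOddTerm_le hx ⟨hs.1.le, hs.2.le⟩ n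
  rw [Complex.ofReal_one] at hzeta
  refine tendsto_nhds_unique hzeta
    (((Complex.continuous_ofReal.tendsto _).comp hseries).congr' ?_)
  filter_upwards [self_mem_nhdsWithin] with s hs
  exact (hurwitzZetaOdd_eq_tsum_of_one_lt hx hs).symm

lemma sum_range_hurwitzOddTerm_one (x : ℝ) (M : ℕ) :
    ((∑ n ∈ range M, hurwitzOddTerm x 1 n : ℝ) : ℂ) =
      (1 / (x : ℂ) + ∑ j ∈ range M, cotTerm x j - 1 / ((M : ℂ) + x)) / 2 := by
  induction M with
  | zero => simp
  | succ M ih =>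
    have hneg : (1 : ℂ) / (x - (M + 1)) = -(1 / ((M : ℂ) + 1 - x)) := by
      rw [← one_div_neg_eq_neg_one_div, neg_sub]
    rw [sum_range_succ, Complex.ofReal_add, ih, sum_range_succ, cotTerm, hneg, hurwitzOddTerm,
      Real.rpow_neg_one, Real.rpow_neg_one]
    push_cast
    ring

lemma ofReal_mem_integerComplement (hx : x ∈ Set.Ioo 0 1) :
    (x : ℂ) ∈ Complex.integerComplement := by
  rw [Complex.mem_integerComplement_iff]
  rintro ⟨n, hn⟩
  obtain rfl : (n : ℝ) = x := by exact_mod_cast hn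
  have h0 : 0 < n := by exact_mod_cast hx.1
  have h1 : n < 1 := by exact_mod_cast hx.2
  lia

theorem hurwitzZetaOdd_one_eq_cot (hx : x ∈ Set.Ioo 0 1) :
    hurwitzZetaOdd (x : UnitAddCircle) 1 = Real.pi / 2 * Complex.cot (Real.pi * x) := by
  have hsum : Summable (hurwitzOddTerm x 1) :=
    .of_norm_bounded (summable_hurwitzOddTerm_bound hx)
      (abs_hurwitzOddTerm_le hx (Set.left_mem_Icc.2 one_le_two))
  have hpartial := (Complex.continuous_ofReal.tendsto _).comp hsum.hasSum.tendsto_sum_nat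
  have htail : Tendsto (fun M : ℕ ↦ 1 / ((M : ℂ) + x)) atTop (𝓝 0) := by
    have := (tendsto_atTop_add_const_right _ x tendsto_natCast_atTop_atTop).inv_tendsto_atTop
    simpa [Function.comp_def] using (Complex.continuous_ofReal.tendsto 0).comp this
  have hcot := ((tendsto_const_nhds (x := 1 / (x : ℂ))).add
    (tendsto_logDeriv_euler_cot_sub (ofReal_mem_integerComplement hx))).sub htail |>.div_const 2
  rw [hurwitzZetaOdd_one_eq_tsum hx]
  refine (tendsto_nhds_unique hpartial
    (hcot.congr fun M ↦ (sum_range_hurwitzOddTerm_one x M).symm)).trans ?_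
  ring

end OddHurwitzZeta

section FirstMoment

variable {N : ℕ} [NeZero N]

lemma val_add_one_add_ite (j : ZMod N) : (j + 1).val + (if j = -1 then N else 0) = j.val + 1 := by
  have hcast : j + 1 = ((j.val + 1 : ℕ) : ZMod N) := by simp
  rcases (Nat.succ_le_of_lt j.val_lt).eq_or_lt with hlast | hlt
  · have hzero : j + 1 = 0 := by rw [hcast, ← Nat.succ_eq_add_one, hlast, natCast_self]
    rw [if_pos (eq_neg_of_add_eq_zero_left hzero), hzero, val_zero, zero_add]
    exact hlast.symm
  · have hval : (j + 1).val = j.val + 1 := by rw [hcast, val_cast_of_lt hlt]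
    have hne : j ≠ -1 := fun h ↦ by simp [h] at hval
    rw [if_neg hne, hval, add_zero]

lemma sum_val_mul_addChar {R : Type*} [CommRing R] [IsDomain R] {ψ : AddChar (ZMod N) R}
    (hψ : ψ ≠ 1) : (ψ 1 - 1) * ∑ j, (j.val : R) * ψ j = N := by
  have hshift : ∑ j, (j.val : R) * ψ j = ψ 1 * ∑ j, ((j + 1).val : R) * ψ j := by
    rw [← Equiv.sum_comp (Equiv.addRight (1 : ZMod N)), mul_sum]
    refine sum_congr rfl fun j _ ↦ ?_
    rw [Equiv.coe_addRight, AddChar.map_add_eq_mul]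
    ring
  have hstep (j : ZMod N) :
      ((j + 1).val : R) * ψ j = j.val * ψ j + ψ j - if j = -1 then N * ψ (-1) else 0 := by
    have := congrArg (Nat.cast (R := R)) (val_add_one_add_ite j)
    push_cast at this
    rw [eq_sub_of_add_eq this]
    split_ifs with h
    · rw [h]; ring
    · ring
  have hinv : ψ 1 * ψ (-1) = 1 := by
    rw [← AddChar.map_add_eq_mul, add_neg_cancel, AddChar.map_zero_eq_one]
  simp_rw [hstep, sum_sub_distrib, sum_add_distrib, AddChar.sum_eq_zero_of_ne_one hψ, sum_ite_eq',
    mem_univ, if_true] at hshift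
  linear_combination -hshift + N * hinv

lemma cot_pi_mul_val_div {k : ZMod N} (hk : k ≠ 0) :
    Complex.cot (Real.pi * (k.val / N : ℝ)) =
      -Complex.I * (1 + 2 / N * ∑ j : ZMod N, (j.val : ℂ) * stdAddChar (-(k * j))) := by
  set w : ℂ := stdAddChar k with hw
  set S : ℂ := ∑ j : ZMod N, (j.val : ℂ) * stdAddChar (-(k * j)) with hS
  have hN : (N : ℂ) ≠ 0 := NeZero.ne _
  have hw0 : w ≠ 0 := (AddChar.val_isUnit stdAddChar k).ne_zero
  have hw1 : 1 - w ≠ 0 := by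
    rw [sub_ne_zero, hw, ← AddChar.map_zero_eq_one (stdAddChar (N := N))]
    exact injective_stdAddChar.ne hk.symm
  have hsum : (w⁻¹ - 1) * S = N := by
    simpa only [AddChar.mulShift_apply, mul_one, neg_mul, AddChar.map_neg_eq_inv, hS] using
      sum_val_mul_addChar (isPrimitive_stdAddChar N (neg_ne_zero.2 hk))
  have hexp : Complex.exp (2 * Complex.I * (Real.pi * (k.val / N : ℝ))) = w := by
    have := stdAddChar_coe (N := N) k.val
    rw [Int.cast_natCast, natCast_zmod_val] at this
    rw [hw, this]
    push_cast
    ring_nf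
  rw [Complex.cot_eq_exp_ratio, hexp, div_eq_iff (mul_ne_zero Complex.I_ne_zero hw1)]
  field_simp at hsum ⊢
  rw [Complex.I_sq]
  linear_combination -2 * hsum

lemma LFunction_one_of_odd {Φ : ZMod N → ℂ} (hΦ : Φ.Odd) :
    LFunction Φ 1 = -(Real.pi * Complex.I / N ^ 2) * ∑ j : ZMod N, (j.val : ℂ) * 𝓕 Φ j := by
  have hN : (0 : ℝ) < N := by exact_mod_cast NeZero.pos N
  have hcot (k : ZMod N) : Φ k * hurwitzZetaOdd (toAddCircle k) 1 =
      -(Real.pi / 2 * Complex.I) * Φ k - Real.pi * Complex.I / N *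
        ∑ j : ZMod N, (j.val : ℂ) * (stdAddChar (-(k * j)) * Φ k) := by
    rcases eq_or_ne k 0 with rfl | hk
    · simp [hΦ.map_zero]
    have hmem : (k.val / N : ℝ) ∈ Set.Ioo (0 : ℝ) 1 :=
      ⟨by have := ZMod.val_pos.2 hk; positivity, (div_lt_one hN).2 (by exact_mod_cast k.val_lt)⟩
    simp_rw [← mul_assoc, ← sum_mul]
    rw [toAddCircle_apply, hurwitzZetaOdd_one_eq_cot hmem, cot_pi_mul_val_div hk]
    ring
  have hswap : ∑ k, ∑ j : ZMod N, (j.val : ℂ) * (stdAddChar (-(k * j)) * Φ k) =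
      ∑ j : ZMod N, (j.val : ℂ) * 𝓕 Φ j := by
    rw [sum_comm]
    simp_rw [dft_apply, smul_eq_mul, mul_sum]
  rw [LFunction_def_odd hΦ]
  simp_rw [hcot, sum_sub_distrib, ← mul_sum, hΦ.sum_eq_zero, hswap, Complex.cpow_neg_one]
  ring

end FirstMoment

section OddCharacters

variable {N : ℕ} [NeZero N]

lemma sum_val_mul_dft_ne_zero {χ : DirichletCharacter ℂ N} (hχ : χ.Odd) :
    ∑ j : ZMod N, (j.val : ℂ) * 𝓕 χ j ≠ 0 := by
  have hne : χ ≠ 1 := by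
    rintro rfl
    rw [DirichletCharacter.Odd, MulChar.one_apply isUnit_one.neg] at hχ
    norm_num at hχ
  have hL := DirichletCharacter.LFunction_apply_one_ne_zero hne
  rw [DirichletCharacter.LFunction, LFunction_one_of_odd hχ.to_fun] at hL
  exact right_ne_zero_of_mul hL

lemma sum_val_unit_mul_dft (χ : DirichletCharacter ℂ N) (u : (ZMod N)ˣ) :
    ∑ j : ZMod N, ((u * j).val : ℂ) * 𝓕 χ j = χ u * ∑ j : ZMod N, (j.val : ℂ) * 𝓕 χ j := by
  have hdft (k : ZMod N) : 𝓕 χ (u⁻¹.val * k) = χ u * 𝓕 χ k := by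
    rw [← dft_comp_unitMul]
    simp_rw [map_mul]
    exact congrFun (dft_const_mul (χ u) χ) k
  rw [mul_sum]
  refine Fintype.sum_equiv u.mulLeft _ _ fun j ↦ ?_
  rw [Units.mulLeft_apply, mul_left_comm, ← hdft, Units.inv_mul_cancel_left]

variable {ι : Type*} [Fintype ι] {u : ι → (ZMod N)ˣ}

lemma sum_apply_eq_zero_of_even_sum_val (hu : Function.Even fun j : ZMod N ↦ ∑ i, (u i * j).val)
    {χ : DirichletCharacter ℂ N} (hχ : χ.Odd) : ∑ i, χ (u i) = 0 := by
  have heven : Function.Even fun j : ZMod N ↦ ((∑ i, (u i * j).val : ℕ) : ℂ) :=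
    hu.left_comp Nat.cast
  have hvanish := (heven.mul_odd (dft_odd_iff.2 hχ.to_fun)).sum_eq_zero
  simp_rw [Pi.mul_apply, Nat.cast_sum, sum_mul] at hvanish
  rw [sum_comm] at hvanish
  simp_rw [sum_val_unit_mul_dft, ← sum_mul] at hvanish
  exact (mul_eq_zero.1 hvanish).resolve_right (sum_val_mul_dft_ne_zero hχ)

lemma totient_mul_card_fiber [DecidableEq (ZMod N)ˣ] (u : ι → (ZMod N)ˣ) (b : (ZMod N)ˣ) :
    (N.totient : ℂ) * #{i | u i = b} =
      ∑ χ : DirichletCharacter ℂ N, χ (b⁻¹ : (ZMod N)ˣ) * ∑ i, χ (u i) := by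
  simp_rw [mul_sum]
  rw [sum_comm]
  simp_rw [← inv_coe_unit, DirichletCharacter.sum_char_inv_mul_char_eq ℂ b.isUnit, Units.val_inj,
    eq_comm (a := b), ← sum_filter, sum_const, nsmul_eq_mul, mul_comm]

lemma card_fiber_eq_card_fiber_neg [DecidableEq (ZMod N)ˣ]
    (hu : Function.Even fun j : ZMod N ↦ ∑ i, (u i * j).val) (b : (ZMod N)ˣ) :
    #{i | u i = b} = #{i | u i = -b} := by
  have htot : (N.totient : ℂ) ≠ 0 := by
    exact_mod_cast (Nat.totient_pos.2 (NeZero.pos N)).ne'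
  suffices h : (N.totient : ℂ) * #{i | u i = b} = N.totient * #{i | u i = -b} by
    exact_mod_cast mul_left_cancel₀ htot h
  rw [totient_mul_card_fiber, totient_mul_card_fiber]
  refine sum_congr rfl fun χ _ ↦ ?_
  rcases χ.even_or_odd with hχ | hχ
  · rw [inv_neg, Units.val_neg, hχ.to_fun]
  · rw [sum_apply_eq_zero_of_even_sum_val hu hχ, mul_zero, mul_zero]

end OddCharacters

section Pairing

variable {ι G : Type*} [Finite ι] [InvolutiveNeg G] {u : ι → G}

/-- A half-system for negation: when no element is its own negative, it contains exactly one of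
`x` and `-x` for each `x`. -/
def negHalfSystem (G : Type*) [Neg G] : Set G := {x | WellOrderingRel x (-x)}

lemma neg_mem_negHalfSystem_iff {x : G} (hx : x ≠ -x) :
    -x ∈ negHalfSystem G ↔ x ∉ negHalfSystem G := by
  rw [negHalfSystem, Set.mem_ofPred_eq, Set.mem_ofPred_eq, neg_neg]
  refine ⟨asymm, fun h ↦ ?_⟩
  exact ((trichotomous_of WellOrderingRel x (-x)).resolve_left h).resolve_left hx

lemma exists_equiv_compl_apply_eq_neg (hG : ∀ x : G, x ≠ -x)
    (hu : ∀ b, Nat.card {i // u i = b} = Nat.card {i // u i = -b}) :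
    ∃ (s : Set ι) (φ : s ≃ (sᶜ : Set ι)), ∀ i, u (φ i) = -u i := by
  let s : Set ι := u ⁻¹' negHalfSystem G
  have hmem {b : G} (i : ι) (hi : u i = b) : i ∈ s ↔ b ∈ negHalfSystem G := by rw [← hi]; rfl
  have hcompl {b : G} (i : ι) (hi : -u i = b) : i ∈ sᶜ ↔ b ∈ negHalfSystem G := by
    rw [← hi, neg_mem_negHalfSystem_iff (hG _)]
    rfl
  have hfiber (b : G) : Nonempty ({i : s // u i = b} ≃ {i : (sᶜ : Set ι) // -u i = b}) := by
    by_cases hb : b ∈ negHalfSystem G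
    · obtain ⟨e⟩ := Finite.card_eq.1 (hu b)
      exact ⟨calc {i : s // u i = b}
        _ ≃ {i // u i = b} := Equiv.subtypeSubtypeEquivSubtype fun hi ↦ (hmem _ hi).2 hb
        _ ≃ {i // u i = -b} := e
        _ ≃ {i // -u i = b} := Equiv.subtypeEquivRight fun _ ↦ neg_eq_iff_eq_neg.symm
        _ ≃ {i : (sᶜ : Set ι) // -u i = b} :=
          (Equiv.subtypeSubtypeEquivSubtype fun hi ↦ (hcompl _ hi).2 hb).symm⟩
    · have : IsEmpty {i : s // u i = b} := ⟨fun ⟨i, hi⟩ ↦ hb ((hmem i hi).1 i.2)⟩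
      have : IsEmpty {i : (sᶜ : Set ι) // -u i = b} := ⟨fun ⟨i, hi⟩ ↦ hb ((hcompl i hi).1 i.2)⟩
      exact ⟨Equiv.equivOfIsEmpty _ _⟩
  let φ (b : G) := (hfiber b).some
  exact ⟨s, Equiv.ofFiberEquiv φ, fun i ↦ neg_eq_iff_eq_neg.1 (Equiv.ofFiberEquiv_map φ i)⟩

lemma exists_equiv_prod_bool_apply_eq_neg {n : ℕ} (hn : Nat.card ι = n * 2)
    (hG : ∀ x : G, x ≠ -x) (hu : ∀ b, Nat.card {i // u i = b} = Nat.card {i // u i = -b}) :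
    ∃ σ : Fin n × Bool ≃ ι, ∀ k, u (σ (k, true)) = -u (σ (k, false)) := by
  classical
  obtain ⟨s, φ, hφ⟩ := exists_equiv_compl_apply_eq_neg hG hu
  have hcard : Nat.card s = n := by
    have hsum := Nat.card_congr (Equiv.Set.sumCompl s)
    rw [Nat.card_sum, ← Nat.card_congr φ] at hsum
    lia
  let e : Fin n ≃ s := (Finite.equivFinOfCardEq hcard).symm
  refine ⟨(Equiv.prodComm _ _).trans <| (Equiv.boolProdEquivSum _).trans <|
    (e.sumCongr (e.trans φ)).trans (Equiv.Set.sumCompl s), fun k ↦ ?_⟩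
  simpa using hφ (e k)

end Pairing

section FractionalParts

lemma isUnit_intCast_of_gcd_eq_one {r : ℕ} {a : ℤ} (ha : Int.gcd a r = 1) :
    IsUnit (a : ZMod r) :=
  (coe_int_isUnit_iff_isCoprime a r).2 (Int.isCoprime_iff_gcd_eq_one.2 ha).symm

variable {ι : Type*} [Fintype ι] {r n : ℕ} [NeZero r]

theorem exists_pairing_of_even_sum_val (hcard : Fintype.card ι = n * 2) {u : ι → (ZMod r)ˣ}
    (hu : Function.Even fun j : ZMod r ↦ ∑ i, (u i * j).val) :
    ∃ σ : Fin n × Bool ≃ ι, ∀ k, u (σ (k, true)) = -u (σ (k, false)) := by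
  classical
  rcases le_or_gt r 2 with hr | hr
  · have htot : r.totient = 1 := by
      have := NeZero.pos r
      rw [Nat.totient_eq_one_iff]
      lia
    have : Subsingleton (ZMod r)ˣ := by
      rw [← Fintype.card_le_one_iff_subsingleton, card_units_eq_totient, htot]
    exact ⟨Fintype.equivOfCardEq (by simp [hcard]), fun _ ↦ Subsingleton.elim _ _⟩
  · have : Fact (2 < r) := ⟨hr⟩
    have hneg (x : (ZMod r)ˣ) : x ≠ -x := fun h ↦ neg_one_ne_one (n := r) <| by
      rw [← mul_neg_one, left_eq_mul] at h
      exact congrArg Units.val h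
    refine exists_equiv_prod_bool_apply_eq_neg (by rwa [Nat.card_eq_fintype_card]) hneg fun b ↦ ?_
    simpa only [Nat.card_eq_fintype_card, Fintype.card_subtype] using
      card_fiber_eq_card_fiber_neg hu b

lemma fract_natCast_mul_intCast_div (j : ℕ) (a : ℤ) :
    Int.fract ((j : ℚ) * a / r) = ((a * j : ZMod r).val : ℚ) / r := by
  have hval : ((a * j : ZMod r).val : ℤ) = a * j % r := by
    rw [← val_intCast, Int.cast_mul, Int.cast_natCast]
  calc Int.fract ((j : ℚ) * a / r) = Int.fract (((a * j : ℤ) : ℚ) / r) := by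
        rw [Int.cast_mul, Int.cast_natCast, mul_comm]
    _ = ((a * j % r : ℤ) : ℚ) / r := Int.fract_div_intCast_eq_div_intCast_mod
    _ = ((a * j : ZMod r).val : ℚ) / r := by rw [← hval, Int.cast_natCast]

lemma fract_natCast_mul_neg_div {j : ℕ} (hj : 1 ≤ j) (hjr : j ≤ r - 1) {a : ℤ}
    (ha : Int.gcd a r = 1) :
    Int.fract ((j : ℚ) * (-a : ℤ) / r) = 1 - Int.fract ((j : ℚ) * a / r) := by
  have hj0 : (j : ZMod r) ≠ 0 := by
    rw [Ne, natCast_eq_zero_iff]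
    exact Nat.not_dvd_of_pos_of_lt hj (by lia)
  have hval : (a * j : ZMod r).val ≠ 0 := by
    rwa [val_ne_zero, Ne, (isUnit_intCast_of_gcd_eq_one ha).mul_right_eq_zero]
  have hfract : Int.fract ((j : ℚ) * a / r) ≠ 0 := by
    rw [fract_natCast_mul_intCast_div]
    exact div_ne_zero (Nat.cast_ne_zero.2 hval) (NeZero.ne _)
  rw [Int.cast_neg, mul_neg, neg_div, Int.fract_neg hfract]

lemma even_sum_val_of_sum_fract_eq {a : ι → ℤ} {c : ℚ}
    (h : ∀ j : ℕ, 1 ≤ j → j ≤ r - 1 → ∑ i, Int.fract ((j : ℚ) * a i / r) = c) :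
    Function.Even fun j : ZMod r ↦ ∑ i, (a i * j).val := by
  have hr : (r : ℚ) ≠ 0 := NeZero.ne _
  have hsum {j : ZMod r} (hj : j ≠ 0) : ((∑ i, (a i * j).val : ℕ) : ℚ) = c * r := by
    have hj' := h j.val (val_pos.2 hj) (Nat.le_sub_one_of_lt j.val_lt)
    simp_rw [fract_natCast_mul_intCast_div, natCast_zmod_val, ← sum_div] at hj'
    rw [← hj', div_mul_cancel₀ _ hr, Nat.cast_sum]
  intro j
  rcases eq_or_ne j 0 with rfl | hj
  · rw [neg_zero]
  · exact Nat.cast_injective ((hsum (neg_ne_zero.2 hj)).trans (hsum hj).symm)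

theorem exists_pairing_of_sum_fract_eq (hcard : Fintype.card ι = n * 2) {a : ι → ℤ}
    (ha : ∀ i, Int.gcd (a i) r = 1) {c : ℚ}
    (h : ∀ j : ℕ, 1 ≤ j → j ≤ r - 1 → ∑ i, Int.fract ((j : ℚ) * a i / r) = c) :
    ∃ σ : Fin n × Bool ≃ ι, ∀ k, a (σ (k, false)) + a (σ (k, true)) ≡ 0 [ZMOD r] := by
  let u (i : ι) : (ZMod r)ˣ := (isUnit_intCast_of_gcd_eq_one (ha i)).unit
  obtain ⟨σ, hσ⟩ := exists_pairing_of_even_sum_val (u := u) hcard (even_sum_val_of_sum_fract_eq h)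
  refine ⟨σ, fun k ↦ ?_⟩
  have hneg : (a (σ (k, true)) : ZMod r) = -a (σ (k, false)) := congrArg Units.val (hσ k)
  rw [← intCast_eq_intCast_iff, Int.cast_add, hneg, add_neg_cancel, Int.cast_zero]

end FractionalParts

/-- Terminal lemma, case gcd(e,r) = 1: setting a₅ = -e, a₆ = -1, the six numbers
can be partitioned into three pairs each summing to 0 mod r. -/
theorem stmt_7 (r : ℕ) (hr : 0 < r) (a₁ a₂ a₃ a₄ e : ℤ)
    (h₁ : Int.gcd a₁ r = 1) (h₂ : Int.gcd a₂ r = 1) (h₃ : Int.gcd a₃ r = 1)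
    (h₄ : Int.gcd a₄ r = 1) (he : Int.gcd e r = 1)
    (hsum : ∀ j : ℕ, 1 ≤ j → j ≤ r - 1 →
      Int.fract ((j : ℚ) * (a₁ : ℚ) / (r : ℚ)) + Int.fract ((j : ℚ) * (a₂ : ℚ) / (r : ℚ)) +
      Int.fract ((j : ℚ) * (a₃ : ℚ) / (r : ℚ)) + Int.fract ((j : ℚ) * (a₄ : ℚ) / (r : ℚ)) =
      Int.fract ((j : ℚ) * (e : ℚ) / (r : ℚ)) + (j : ℚ) / (r : ℚ) + 1) :
    ∃ σ : Equiv.Perm (Fin 6),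
      (![a₁, a₂, a₃, a₄, -e, -1] (σ 0) + ![a₁, a₂, a₃, a₄, -e, -1] (σ 1)) ≡ 0 [ZMOD (r : ℤ)] ∧
      (![a₁, a₂, a₃, a₄, -e, -1] (σ 2) + ![a₁, a₂, a₃, a₄, -e, -1] (σ 3)) ≡ 0 [ZMOD (r : ℤ)] ∧
      (![a₁, a₂, a₃, a₄, -e, -1] (σ 4) + ![a₁, a₂, a₃, a₄, -e, -1] (σ 5)) ≡ 0 [ZMOD (r : ℤ)] := by
  have : NeZero r := ⟨hr.ne'⟩
  let a : Fin 6 → ℤ := ![a₁, a₂, a₃, a₄, -e, -1]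
  have hgcd : ∀ i, Int.gcd (a i) r = 1 := by
    simp [a, Fin.forall_fin_succ, h₁, h₂, h₃, h₄, he]
  have hthree (j : ℕ) (hj : 1 ≤ j) (hjr : j ≤ r - 1) :
      ∑ i, Int.fract ((j : ℚ) * a i / r) = 3 := by
    have hfract : Int.fract ((j : ℚ) * (1 : ℤ) / r) = j / r := by
      rw [fract_natCast_mul_intCast_div, Int.cast_one, one_mul, val_cast_of_lt (by lia)]
    rw [Fin.sum_univ_six]
    change Int.fract ((j : ℚ) * a₁ / r) + Int.fract ((j : ℚ) * a₂ / r) +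
      Int.fract ((j : ℚ) * a₃ / r) + Int.fract ((j : ℚ) * a₄ / r) +
      Int.fract ((j : ℚ) * (-e : ℤ) / r) + Int.fract ((j : ℚ) * (-1 : ℤ) / r) = 3
    rw [fract_natCast_mul_neg_div hj hjr he, fract_natCast_mul_neg_div hj hjr Int.one_gcd, hfract,
      hsum j hj hjr]
    ring
  obtain ⟨σ, hσ⟩ := exists_pairing_of_sum_fract_eq (n := 3) rfl hgcd hthree
  exact ⟨(finProdFinEquiv.symm.trans (.prodCongrRight fun _ ↦ finTwoEquiv)).trans σ,
    hσ 0, hσ 1, hσ 2⟩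
end
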